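/- Let n ≥ 2 and let F, G be coprime completely reducible homogeneous polynomials of the same degree d ≥ 1 in R = MvPolynomial (Fin (n+1)) ℂ such that: the generic fiber of the pencil 𝒫 generated by F and G is irreducible; the pencil is essential (the linear factors of F together with those of G span the full (n+1)-dimensional space of degree-1 forms); and there exist k ≥ 3 pairwise distinct completely reducible members P_1 = F, P_2 = G, P_3, …, P_k of 𝒫. Let Q̃ = P_1⋯P_k, let Q be its radical, and let a_i = (Q/Q̃)·(F·∂_iG − G·∂_iF). Then the Jacobian determinant D = det(∂_j a_i)_{0≤i,j≤n} is not the zero polynomial (equivalently, the Gauss map of the foliation associated to 𝒫 is non-degenerate, i.e. dominant). -/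

import Mathlib

open MvPolynomial

noncomputable section

/-- A linear form: a nonzero homogeneous polynomial of degree 1. -/
def IsLinearForm (n : ℕ) (α : MvPolynomial (Fin (n + 1)) ℂ) : Prop :=
  α ≠ 0 ∧ α.IsHomogeneous 1

/-- A completely reducible polynomial: a product of linear forms. -/
def CompletelyReducible (n : ℕ) (P : MvPolynomial (Fin (n + 1)) ℂ) : Prop :=
  ∃ s : Multiset (MvPolynomial (Fin (n + 1)) ℂ),
    (∀ α ∈ s, IsLinearForm n α) ∧ P = s.prod

/-- F and G have no common non-unit factor. -/
def RelPrime (n : ℕ) (F G : MvPolynomial (Fin (n + 1)) ℂ) : Prop :=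
  ∀ p : MvPolynomial (Fin (n + 1)) ℂ, p ∣ F → p ∣ G → IsUnit p

/-- The generic fiber of the pencil generated by F and G is irreducible. -/
def GenericFiberIrreducible (n : ℕ) (F G : MvPolynomial (Fin (n + 1)) ℂ) : Prop :=
  {c : ℂ | ¬ Irreducible (F + C c * G)}.Finite

/-
Let `η = dlog (G / F)`, so that `a` is `η` times a rational function `H`, and let `E` be the Euler
field. If the Jacobian of `a` is singular, some nonzero rational vector field `W` kills every `a_i`.
As `E` acts on the coefficients of `η` by `-1`, the field `V = W - (W H / H) E` kills all of them.
For the linear factors `B_i` of `F` and `G`, with signs `ε_i`, put `t_i = V B_i / B_i`; then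
`∑ ε_i t_i dlog B_i = 0`, and contraction with `V` followed by differentiation turns this into
`∑ ε_i t_i ^ k dlog B_i = 0` for all `k ≥ 1`. A Vandermonde argument separates the values of the
`t_i`: the factors sharing a nonzero value would satisfy `∑ ε_i dlog B_i = 0`, which is impossible
since `F` and `G` are coprime. So every `t_i` vanishes, and `V = 0` because the `B_i` span the
linear forms. Hence `E` itself kills every `a_i`, that is, the `a_i` are constants; together with
`∑ x_i a_i = 0` this forces `a = 0`, whereas `η ≠ 0`.
-/

theorem sum_filter_eq_zero_of_forall_sum_mul_pow_eq_zero {K ι : Type*} [Field K] [DecidableEq K]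
    [Fintype ι] {c t : ι → K} (h : ∀ k : ℕ, ∑ i, c i * t i ^ k = 0) (τ : K) :
    ∑ i with t i = τ, c i = 0 := by
  have hpoly (p : Polynomial K) : ∑ i, c i * p.eval (t i) = 0 := by
    simp only [Polynomial.eval_eq_sum_range, Finset.mul_sum, mul_left_comm (c _)]
    rw [Finset.sum_comm' (t' := Finset.range (p.natDegree + 1)) (s' := fun _ ↦ Finset.univ)
      (by simp)]
    simp only [← Finset.mul_sum, h, mul_zero, Finset.sum_const_zero]
  set V : Finset K := insert τ (Finset.univ.image t)
  rw [← hpoly (Lagrange.basis V id τ), Finset.sum_filter]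
  refine Finset.sum_congr rfl fun i _ ↦ ?_
  have hti : t i ∈ V := Finset.mem_insert_of_mem (Finset.mem_image_of_mem t (Finset.mem_univ i))
  split_ifs with hτ
  · rw [hτ, show (Lagrange.basis V id τ).eval τ = 1 from
      Lagrange.eval_basis_self (v := id) (Set.injOn_id _) (Finset.mem_insert_self _ _), mul_one]
  · rw [show (Lagrange.basis V id τ).eval (t i) = 0 from
      Lagrange.eval_basis_of_ne (v := id) (Ne.symm hτ) hti, mul_zero]

section DerivationExtension

open TensorProduct

variable {A S T : Type*} [CommRing A] [CommRing S] [CommRing T] [Algebra A S] [Algebra A T]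
  [Algebra S T] [IsScalarTower A S T] [Algebra.FormallyEtale S T]

/-- The extension to a formally étale `S`-algebra `T`, for instance a localization of `S`, of an
`A`-derivation from `S` to `T`. -/
def derivationExtension (d : Derivation A S T) : Derivation A T T :=
  (d.liftKaehlerDifferential.liftBaseChange T ∘ₗ
    (KaehlerDifferential.tensorKaehlerEquivOfFormallyEtale A S T).symm.toLinearMap).compDer
    (KaehlerDifferential.D A T)

theorem derivationExtension_algebraMap (d : Derivation A S T) (s : S) :
    derivationExtension d (algebraMap S T s) = d s := by
  change d.liftKaehlerDifferential.liftBaseChange T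
    ((KaehlerDifferential.tensorKaehlerEquivOfFormallyEtale A S T).symm
      (KaehlerDifferential.D A T (algebraMap S T s))) = d s
  rw [KaehlerDifferential.tensorKaehlerEquivOfFormallyEtale_symm_D_algebraMap,
    LinearMap.liftBaseChange_tmul, one_smul, Derivation.liftKaehlerDifferential_comp_D]

end DerivationExtension

section LogarithmicDerivative

variable {A K : Type*} [CommRing A] [Field K] [Algebra A K]

/-- The logarithmic derivative `D b / b` of `b` along the derivation `D`. Mathlib's
`Differential.logDeriv` fixes one derivation per field, whereas here the derivation varies. -/
def dlog (D : Derivation A K K) (b : K) : K := D b / b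

theorem dlog_mul (D : Derivation A K K) {b c : K} (hb : b ≠ 0) (hc : c ≠ 0) :
    dlog D (b * c) = dlog D b + dlog D c := by
  simp only [dlog, Derivation.leibniz, smul_eq_mul]
  field_simp
  ring

theorem dlog_prod {ι : Type*} (D : Derivation A K K) (s : Finset ι) {b : ι → K}
    (hb : ∀ i, b i ≠ 0) : dlog D (∏ i ∈ s, b i) = ∑ i ∈ s, dlog D (b i) := by
  classical
  induction s using Finset.induction_on with
  | empty => simp [dlog]
  | insert i s hi ih =>
    rw [Finset.prod_insert hi, Finset.sum_insert hi,
      dlog_mul D (hb i) (Finset.prod_ne_zero_iff.mpr fun j _ ↦ hb j), ih]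

theorem sum_sumElim_mul_dlog {ι κ : Type*} (D : Derivation A K K) (T : Finset (ι ⊕ κ))
    {b : ι ⊕ κ → K} (hb : ∀ i, b i ≠ 0) :
    ∑ i ∈ T, (Sum.elim (-1) 1 i : ℤ) * dlog D (b i) =
      dlog D (∏ j ∈ T.toRight, b (.inr j)) - dlog D (∏ i ∈ T.toLeft, b (.inl i)) := by
  rw [Finset.sum_sum_eq_sum_toLeft_add_sum_toRight, dlog_prod D _ fun _ ↦ hb _,
    dlog_prod D _ fun _ ↦ hb _]
  simp only [Sum.elim_inl, Sum.elim_inr, Pi.neg_apply, Pi.one_apply, Int.cast_neg, Int.cast_one,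
    neg_one_mul, one_mul, Finset.sum_neg_distrib]
  ring

theorem derivation_dlog (D D' : Derivation A K K) (b : K) :
    D' (dlog D b) = D' (D b) / b - dlog D' b * dlog D b := by
  rcases eq_or_ne b 0 with rfl | hb
  · simp [dlog]
  · simp only [dlog, Derivation.leibniz_div, smul_eq_mul]
    field_simp

end LogarithmicDerivative

section VectorField

variable {A K ι σ : Type*} [CommRing A] [Field K] [Algebra A K] [Fintype ι] [Fintype σ]

/-- The vector field `∑ l, v l • D l` with coefficients `v` in the frame `D`. -/
def vectorField (D : σ → Derivation A K K) (v : σ → K) : Derivation A K K := ∑ l, v l • D l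

/-- The coefficients, in the coframe dual to `D`, of the logarithmic form
`∑ ε i • dlog (b i) = dlog (∏ b i ^ ε i)`. -/
def logForm (D : σ → Derivation A K K) (ε : ι → ℤ) (b : ι → K) (y : σ) : K :=
  ∑ i, ε i * dlog (D y) (b i)

variable {D : σ → Derivation A K K} {ε : ι → ℤ} {b : ι → K}

theorem vectorField_apply (v : σ → K) (c : K) : vectorField D v c = ∑ l, v l * D l c := by
  change Derivation.coeFnAddMonoidHom (∑ l, v l • D l) c = _
  rw [map_sum, Finset.sum_apply]
  rfl

theorem exists_eq_smul_of_vectorField_mul_eq_zero {x η : σ → K} {H : K} (hH : H ≠ 0)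
    (hx : ∀ y, vectorField D x (η y) = -η y)
    (hη : ∀ v, (∀ y, vectorField D v (η y) = 0) → v = 0) {w : σ → K}
    (hw : ∀ y, vectorField D w (H * η y) = 0) : ∃ μ : K, w = μ • x := by
  refine ⟨vectorField D w H / H, sub_eq_zero.mp (hη _ fun y ↦ ?_)⟩
  have hlin (μ c : K) :
      vectorField D (w - μ • x) c = vectorField D w c - μ * vectorField D x c := by
    simp only [vectorField_apply, Pi.sub_apply, Pi.smul_apply, smul_eq_mul, sub_mul,
      Finset.sum_sub_distrib, Finset.mul_sum, mul_assoc]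
  have hwy := hw y
  rw [Derivation.leibniz, smul_eq_mul, smul_eq_mul] at hwy
  rw [hlin, hx]
  field_simp
  linear_combination hwy

theorem dlog_vectorField (v : σ → K) (c : K) :
    dlog (vectorField D v) c = ∑ l, v l * dlog (D l) c := by
  simp only [dlog, vectorField_apply, Finset.sum_div, mul_div_assoc]

theorem sum_mul_dlog_vectorField_eq_zero {c : ι → K}
    (h : ∀ y, ∑ i, c i * dlog (D y) (b i) = 0) (v : σ → K) :
    ∑ i, c i * dlog (vectorField D v) (b i) = 0 := by
  simp only [dlog_vectorField, Finset.mul_sum, mul_left_comm _ (v _)]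
  rw [Finset.sum_comm]
  simp only [← Finset.mul_sum, h, mul_zero, Finset.sum_const_zero]

theorem vectorField_logForm (hb : ∀ i j l, D j (D l (b i)) = 0) (v : σ → K) (y : σ) :
    vectorField D v (logForm D ε b y) =
      -∑ i, ε i * dlog (vectorField D v) (b i) * dlog (D y) (b i) := by
  have hDb : ∀ i, vectorField D v (D y (b i)) = 0 := fun i ↦ by simp [vectorField_apply, hb]
  simp only [logForm, map_sum, Derivation.leibniz, Derivation.map_intCast, derivation_dlog, hDb,
    smul_eq_mul, ← Finset.sum_neg_distrib]
  exact Finset.sum_congr rfl fun i _ ↦ by ring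

theorem derivation_dlog_vectorField {c : K} (hc : ∀ j l, D j (D l c) = 0) (v : σ → K) (y : σ) :
    D y (dlog (vectorField D v) c) =
      dlog (vectorField D fun l ↦ D y (v l)) c - dlog (vectorField D v) c * dlog (D y) c := by
  have hDV : D y (vectorField D v c) = vectorField D (fun l ↦ D y (v l)) c := by
    simp [vectorField_apply, Derivation.leibniz, hc, mul_comm]
  rw [derivation_dlog, hDV, mul_comm (dlog (D y) c)]
  rfl

/- Contracting the `k`-th relation with `v` gives a relation between the `(k + 2)`-th powers of the
`dlog V (b i)`, whose derivative is the next relation, up to a multiple of the `k`-th one. -/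
theorem sum_dlog_pow_mul_dlog_eq_zero [CharZero K] (hb : ∀ i j l, D j (D l (b i)) = 0)
    {v : σ → K}
    (hv : ∀ y, ∑ i, ε i * dlog (vectorField D v) (b i) * dlog (D y) (b i) = 0) (k : ℕ) (y : σ) :
    ∑ i, ε i * dlog (vectorField D v) (b i) ^ (k + 1) * dlog (D y) (b i) = 0 := by
  induction k generalizing y with
  | zero => simpa using hv y
  | succ k ih =>
    set t : ι → K := fun i ↦ dlog (vectorField D v) (b i)
    have hpow : ∑ i, ε i * t i ^ (k + 2) = 0 := by
      simpa only [mul_assoc, ← pow_succ] using sum_mul_dlog_vectorField_eq_zero ih v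
    have hcontr : ∑ i, ε i * t i ^ (k + 1) * dlog (vectorField D fun l ↦ D y (v l)) (b i) = 0 :=
      sum_mul_dlog_vectorField_eq_zero ih _
    have hderiv : (k + 2 : ℕ) * (∑ i, ε i * t i ^ (k + 1) *
        dlog (vectorField D fun l ↦ D y (v l)) (b i) -
          ∑ i, ε i * t i ^ (k + 2) * dlog (D y) (b i)) = D y (∑ i, ε i * t i ^ (k + 2)) := by
      rw [map_sum, ← Finset.sum_sub_distrib, Finset.mul_sum]
      refine Finset.sum_congr rfl fun i _ ↦ ?_
      simp only [t, Derivation.leibniz, Derivation.leibniz_pow, Derivation.map_intCast,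
        derivation_dlog_vectorField (hb _), smul_eq_mul, nsmul_eq_mul, Nat.add_succ_sub_one]
      ring
    rw [hpow, map_zero, hcontr, zero_sub, mul_neg, neg_eq_zero] at hderiv
    exact (mul_eq_zero.mp hderiv).resolve_left (Nat.cast_ne_zero.mpr (by omega))

theorem dlog_vectorField_eq_zero_of_logForm_eq_zero [CharZero K]
    (hb : ∀ i j l, D j (D l (b i)) = 0)
    (hε : ∀ T : Finset ι, (∀ y, ∑ i ∈ T, ε i * dlog (D y) (b i) = 0) → T = ∅) {v : σ → K}
    (hv : ∀ y, vectorField D v (logForm D ε b y) = 0) (i : ι) :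
    dlog (vectorField D v) (b i) = 0 := by
  classical
  set t : ι → K := fun i ↦ dlog (vectorField D v) (b i)
  by_contra hti
  have hrel (y : σ) : ∑ j, ε j * t j * dlog (D y) (b j) = 0 :=
    neg_eq_zero.mp ((vectorField_logForm hb v y).symm.trans (hv y))
  have hlevel (y : σ) : ∑ j with t j = t i, ε j * t j * dlog (D y) (b j) = 0 := by
    refine sum_filter_eq_zero_of_forall_sum_mul_pow_eq_zero (fun k ↦ ?_) (t i)
    rw [← sum_dlog_pow_mul_dlog_eq_zero hb hrel k y]
    exact Finset.sum_congr rfl fun j _ ↦ by ring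
  have hempty : (Finset.univ.filter fun j ↦ t j = t i) = ∅ := hε _ fun y ↦ by
    refine (mul_eq_zero.mp (?_ : t i * _ = 0)).resolve_left hti
    rw [← hlevel y, Finset.mul_sum]
    refine Finset.sum_congr rfl fun j hj ↦ ?_
    rw [← (Finset.mem_filter.mp hj).2]
    ring
  exact Finset.notMem_empty i (hempty ▸ Finset.mem_filter.mpr ⟨Finset.mem_univ i, rfl⟩)

end VectorField

section HomogeneousPolynomials

variable {𝕜 σ : Type*} [Field 𝕜]

/-- A nonzero homogeneous polynomial of degree `1`: the notion `IsLinearForm` over an arbitrary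
field and in an arbitrary set of variables. -/
def IsDegreeOneForm (α : MvPolynomial σ 𝕜) : Prop := α ≠ 0 ∧ α.IsHomogeneous 1

/-- A product of nonzero linear forms: the notion `CompletelyReducible` over an arbitrary field and
in an arbitrary set of variables. -/
def IsProductOfDegreeOneForms (P : MvPolynomial σ 𝕜) : Prop :=
  ∃ s : Multiset (MvPolynomial σ 𝕜), (∀ α ∈ s, IsDegreeOneForm α) ∧ P = s.prod

theorem IsDegreeOneForm.irreducible {α : MvPolynomial σ 𝕜} (hα : IsDegreeOneForm α) :
    Irreducible α := by
  have hdeg := hα.2.totalDegree hα.1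
  refine irreducible_of_totalDegree_eq_one hdeg fun x hx ↦ isUnit_iff_ne_zero.mpr ?_
  rintro rfl
  exact hα.1 (MvPolynomial.ext _ _ fun i ↦ by simpa using hx i)

theorem IsDegreeOneForm.mem_span_of_dvd_prod {α : MvPolynomial σ 𝕜} (hα : IsDegreeOneForm α)
    {ι : Type*} [Fintype ι] {f : ι → MvPolynomial σ 𝕜} (hf : ∀ i, IsDegreeOneForm (f i))
    (h : α ∣ ∏ i, f i) : α ∈ Submodule.span 𝕜 (Set.range f) := by
  obtain ⟨i, -, hi⟩ := (hα.irreducible.prime.dvd_finsetProd_iff f).mp h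
  obtain ⟨u, hu⟩ := (hα.irreducible.associated_of_dvd (hf i).irreducible hi).symm
  obtain ⟨c, -, hc⟩ := isUnit_iff_eq_C_of_isReduced.mp u.isUnit
  rw [← hu, hc, mul_comm, ← smul_eq_C_mul]
  exact Submodule.smul_mem _ c (Submodule.subset_span ⟨i, rfl⟩)

theorem prod_ne_zero_of_isDegreeOneForm {ι : Type*} {f : ι → MvPolynomial σ 𝕜}
    (hf : ∀ i, IsDegreeOneForm (f i)) (s : Finset ι) : ∏ i ∈ s, f i ≠ 0 :=
  Finset.prod_ne_zero_iff.mpr fun i _ ↦ (hf i).1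

theorem isHomogeneous_prod_of_isDegreeOneForm {ι : Type*} {f : ι → MvPolynomial σ 𝕜}
    (hf : ∀ i, IsDegreeOneForm (f i)) (s : Finset ι) : (∏ i ∈ s, f i).IsHomogeneous s.card := by
  simpa using IsHomogeneous.prod s f (fun _ ↦ 1) fun i _ ↦ (hf i).2

theorem IsProductOfDegreeOneForms.exists_eq_prod {P : MvPolynomial σ 𝕜}
    (hP : IsProductOfDegreeOneForms P) : ∃ (m : ℕ) (f : Fin m → MvPolynomial σ 𝕜),
      (∀ i, IsDegreeOneForm (f i)) ∧ P = ∏ i, f i := by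
  obtain ⟨s, hs, rfl⟩ := hP
  refine ⟨s.toList.length, s.toList.get, fun i ↦ hs _ (Multiset.mem_toList.mp (List.get_mem _ _)),
    ?_⟩
  rw [← List.prod_ofFn, List.ofFn_get, Multiset.prod_toList]

theorem IsDegreeOneForm.pderiv_pderiv {α : MvPolynomial σ 𝕜} (hα : IsDegreeOneForm α) (j l : σ) :
    pderiv j (pderiv l α) = 0 := by
  have hdeg : (pderiv l α).totalDegree = 0 := Nat.le_zero.mp hα.2.pderiv.totalDegree_le
  rw [totalDegree_eq_zero_iff_eq_C.mp hdeg, pderiv_C]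

variable [CharZero 𝕜]

theorem eq_zero_of_isHomogeneous_of_dvd_pderiv [Finite σ] {A : MvPolynomial σ 𝕜} {d : ℕ}
    (hA : A.IsHomogeneous d) (hA0 : A ≠ 0) (h : ∀ j, A ∣ pderiv j A) : d = 0 := by
  have := Fintype.ofFinite σ
  by_contra hd
  have hpderiv (j : σ) : pderiv j A = 0 := by
    by_contra hne
    have hle := (totalDegree_le_of_dvd_of_isDomain (h j) hne).trans hA.pderiv.totalDegree_le
    rw [hA.totalDegree hA0] at hle
    omega
  have hEuler := hA.sum_X_mul_pderiv
  simp only [hpderiv, mul_zero, Finset.sum_const_zero] at hEuler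
  exact smul_ne_zero hd hA0 hEuler.symm

variable [Fintype σ]

theorem coeff_sum_X_mul_pderiv {R : Type*} [CommSemiring R] (p : MvPolynomial σ R) (m : σ →₀ ℕ) :
    coeff m (∑ j, X j * pderiv j p) = m.degree * coeff m p := by
  induction p using MvPolynomial.induction_on' with
  | monomial e r =>
    classical
    simp only [X_mul_pderiv_monomial]
    rw [← Finset.sum_smul, ← Finsupp.degree_eq_sum, coeff_smul, coeff_monomial, nsmul_eq_mul]
    split_ifs with hem
    · rw [hem]
    · rw [mul_zero, mul_zero]
  | add p q hp hq =>
    simp only [map_add, mul_add, Finset.sum_add_distrib, coeff_add, hp, hq]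

theorem eq_C_of_sum_X_mul_pderiv_eq_zero {p : MvPolynomial σ 𝕜}
    (h : ∑ j, X j * pderiv j p = 0) : p = C (coeff 0 p) := by
  classical
  ext m
  rw [coeff_C]
  split_ifs with hm
  · rw [hm]
  · refine (mul_eq_zero.mp ((coeff_sum_X_mul_pderiv p m).symm.trans (by rw [h, coeff_zero])))
      |>.resolve_left (Nat.cast_ne_zero.mpr fun hdeg ↦ hm ?_)
    exact ((Finsupp.degree_eq_zero_iff m).mp hdeg).symm

theorem eq_zero_of_sum_X_mul_eq_zero {a : σ → MvPolynomial σ 𝕜}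
    (ha : ∀ i, ∑ j, X j * pderiv j (a i) = 0) (hXa : ∑ i, X i * a i = 0) (i : σ) : a i = 0 := by
  classical
  have hpderiv (j : σ) : pderiv i (a j) = 0 := by
    rw [eq_C_of_sum_X_mul_pderiv_eq_zero (ha j), pderiv_C]
  simpa [hpderiv, pderiv_X, Pi.single_apply] using congrArg (pderiv i) hXa

theorem sum_X_mul_sub_pderiv_eq_zero {R : Type*} [CommRing R] {F G : MvPolynomial σ R} {d : ℕ}
    (hF : F.IsHomogeneous d) (hG : G.IsHomogeneous d) :
    ∑ i, X i * (F * pderiv i G - G * pderiv i F) = 0 := by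
  simp only [mul_sub, mul_left_comm (X _), Finset.sum_sub_distrib, ← Finset.mul_sum,
    hF.sum_X_mul_pderiv, hG.sum_X_mul_pderiv, mul_smul_comm, mul_comm G F, sub_self]

end HomogeneousPolynomials

section RationalFunctions

variable {𝕜 σ : Type*} [Field 𝕜]

local notation "K" => FractionRing (MvPolynomial σ 𝕜)

local notation "φ" => algebraMap (MvPolynomial σ 𝕜) K

/-- The partial derivative `∂ / ∂ x_j` on the field of rational functions. -/
def fracPderiv (j : σ) : Derivation 𝕜 K K :=
  derivationExtension ((Algebra.linearMap (MvPolynomial σ 𝕜) K).compDer (pderiv j))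

theorem fracPderiv_algebraMap (j : σ) (p : MvPolynomial σ 𝕜) :
    fracPderiv j (φ p) = φ (pderiv j p) :=
  derivationExtension_algebraMap _ p

theorem IsDegreeOneForm.algebraMap_ne_zero {α : MvPolynomial σ 𝕜} (hα : IsDegreeOneForm α) :
    φ α ≠ 0 :=
  IsFractionRing.to_map_eq_zero_iff.not.mpr hα.1

theorem IsDegreeOneForm.fracPderiv_fracPderiv {α : MvPolynomial σ 𝕜} (hα : IsDegreeOneForm α)
    (j l : σ) : fracPderiv j (fracPderiv l (φ α)) = 0 := by
  rw [fracPderiv_algebraMap, fracPderiv_algebraMap, hα.pderiv_pderiv, map_zero]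

theorem eq_zero_of_dlog_fracPderiv_eq [Finite σ] [CharZero 𝕜] {A B : MvPolynomial σ 𝕜} {d : ℕ}
    (hA : A.IsHomogeneous d) (hA0 : A ≠ 0) (hB0 : B ≠ 0) (hAB : IsRelPrime A B)
    (h : ∀ y, dlog (fracPderiv y) (φ A) = dlog (fracPderiv y) (φ B)) : d = 0 := by
  refine eq_zero_of_isHomogeneous_of_dvd_pderiv hA hA0 fun y ↦ hAB.dvd_of_dvd_mul_right ?_
  have hy := h y
  simp only [dlog, fracPderiv_algebraMap] at hy
  rw [div_eq_div_iff (IsFractionRing.to_map_eq_zero_iff.not.mpr hA0)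
    (IsFractionRing.to_map_eq_zero_iff.not.mpr hB0), ← map_mul, ← map_mul] at hy
  exact ⟨pderiv y B, by rw [IsFractionRing.injective _ K hy, mul_comm]⟩

variable {ι κ : Type*}

theorem eq_empty_of_sum_sumElim_mul_dlog_eq_zero [Finite σ] [CharZero 𝕜] [Fintype ι] [Fintype κ]
    {B : ι ⊕ κ → MvPolynomial σ 𝕜} (hB : ∀ i, IsDegreeOneForm (B i))
    (hcop : IsRelPrime (∏ i, B (.inl i)) (∏ j, B (.inr j))) {T : Finset (ι ⊕ κ)}
    (h : ∀ y, ∑ i ∈ T, (Sum.elim (-1) 1 i : ℤ) * dlog (fracPderiv y) (φ (B i)) = 0) :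
    T = ∅ := by
  have hB_inl (i : ι) : IsDegreeOneForm (B (.inl i)) := hB _
  have hB_inr (j : κ) : IsDegreeOneForm (B (.inr j)) := hB _
  have hcopT : IsRelPrime (∏ i ∈ T.toLeft, B (.inl i)) (∏ j ∈ T.toRight, B (.inr j)) :=
    (hcop.of_dvd_left (Finset.prod_dvd_prod_of_subset _ _ _ (Finset.subset_univ _))).of_dvd_right
      (Finset.prod_dvd_prod_of_subset _ _ _ (Finset.subset_univ _))
  have hdlog (y : σ) : dlog (fracPderiv y) (φ (∏ j ∈ T.toRight, B (.inr j))) =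
      dlog (fracPderiv y) (φ (∏ i ∈ T.toLeft, B (.inl i))) := by
    rw [← sub_eq_zero, map_prod, map_prod, ← h y,
      sum_sumElim_mul_dlog _ _ fun i ↦ (hB i).algebraMap_ne_zero]
  have hleft : T.toLeft.card = 0 :=
    eq_zero_of_dlog_fracPderiv_eq (isHomogeneous_prod_of_isDegreeOneForm hB_inl _)
      (prod_ne_zero_of_isDegreeOneForm hB_inl _) (prod_ne_zero_of_isDegreeOneForm hB_inr _)
      hcopT fun y ↦ (hdlog y).symm
  have hright : T.toRight.card = 0 :=
    eq_zero_of_dlog_fracPderiv_eq (isHomogeneous_prod_of_isDegreeOneForm hB_inr _)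
      (prod_ne_zero_of_isDegreeOneForm hB_inr _) (prod_ne_zero_of_isDegreeOneForm hB_inl _)
      hcopT.symm hdlog
  exact Finset.card_eq_zero.mp (by rw [← Finset.card_toLeft_add_card_toRight, hleft, hright])

/-- The coefficients `∂_y G / G - ∂_y F / F` of the logarithmic form `dlog (G / F)`, where
`F = ∏ B (inl i)` and `G = ∏ B (inr j)`. -/
def pencilLogForm [Fintype ι] [Fintype κ] (B : ι ⊕ κ → MvPolynomial σ 𝕜) (y : σ) : K :=
  logForm fracPderiv (Sum.elim (-1) 1) (fun i ↦ φ (B i)) y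

theorem algebraMap_mul_pencilLogForm [Fintype ι] [Fintype κ] {B : ι ⊕ κ → MvPolynomial σ 𝕜}
    (hB : ∀ i, IsDegreeOneForm (B i)) (y : σ) :
    φ ((∏ i, B (.inl i)) * ∏ j, B (.inr j)) * pencilLogForm B y =
      φ ((∏ i, B (.inl i)) * pderiv y (∏ j, B (.inr j)) -
        (∏ j, B (.inr j)) * pderiv y (∏ i, B (.inl i))) := by
  have hF : φ (∏ i, B (.inl i)) ≠ 0 :=
    IsFractionRing.to_map_eq_zero_iff.not.mpr (prod_ne_zero_of_isDegreeOneForm (fun _ ↦ hB _) _)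
  have hG : φ (∏ j, B (.inr j)) ≠ 0 :=
    IsFractionRing.to_map_eq_zero_iff.not.mpr (prod_ne_zero_of_isDegreeOneForm (fun _ ↦ hB _) _)
  rw [pencilLogForm, logForm, sum_sumElim_mul_dlog _ _ fun i ↦ (hB i).algebraMap_ne_zero]
  simp only [Finset.toLeft_univ, Finset.toRight_univ, ← map_prod, dlog, fracPderiv_algebraMap,
    map_sub, map_mul]
  field_simp

theorem vectorField_fracPderiv_X [Fintype σ] (v : σ → K) (i : σ) :
    vectorField fracPderiv v (φ (X i)) = v i := by
  classical
  simp [vectorField_apply, fracPderiv_algebraMap, pderiv_X, Pi.single_apply]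

theorem eq_zero_of_dlog_vectorField_fracPderiv_eq_zero [Fintype σ]
    {B : ι → MvPolynomial σ 𝕜} (hB : ∀ i, IsDegreeOneForm (B i))
    (hspan : ∀ l, X l ∈ Submodule.span 𝕜 (Set.range B))
    {v : σ → K} (h : ∀ i, dlog (vectorField fracPderiv v) (φ (B i)) = 0) : v = 0 := by
  have hker : Submodule.span 𝕜 (Set.range B) ≤ LinearMap.ker
      ((vectorField fracPderiv v).toLinearMap ∘ₗ (IsScalarTower.toAlgHom 𝕜 _ K).toLinearMap) :=
    Submodule.span_le.mpr <| Set.range_subset_iff.mpr fun i ↦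
      (div_eq_zero_iff.mp (h i)).resolve_right (hB i).algebraMap_ne_zero
  funext l
  rw [← vectorField_fracPderiv_X v l]
  exact LinearMap.mem_ker.mp (hker (hspan l))

theorem vectorField_X_logForm [Fintype σ] [Fintype ι] {B : ι → MvPolynomial σ 𝕜}
    (hB : ∀ i, IsDegreeOneForm (B i)) (ε : ι → ℤ) (y : σ) :
    vectorField fracPderiv (fun l ↦ φ (X l)) (logForm fracPderiv ε (fun i ↦ φ (B i)) y) =
      -logForm fracPderiv ε (fun i ↦ φ (B i)) y := by
  have hEuler (i : ι) : dlog (vectorField fracPderiv fun l ↦ φ (X l)) (φ (B i)) = 1 := by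
    rw [dlog, vectorField_apply]
    simp only [fracPderiv_algebraMap, ← map_mul, ← map_sum, (hB i).2.sum_X_mul_pderiv, one_smul]
    exact div_self (hB i).algebraMap_ne_zero
  rw [vectorField_logForm fun i ↦ (hB i).fracPderiv_fracPderiv]
  simp only [hEuler, mul_one, logForm]

section Pencil

variable [Fintype ι] [Fintype κ] {B : ι ⊕ κ → MvPolynomial σ 𝕜}

theorem eq_zero_of_vectorField_pencilLogForm_eq_zero [CharZero 𝕜] [Fintype σ]
    (hB : ∀ i, IsDegreeOneForm (B i)) (hcop : IsRelPrime (∏ i, B (.inl i)) (∏ j, B (.inr j)))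
    (hspan : ∀ l, X l ∈ Submodule.span 𝕜 (Set.range B)) {v : σ → K}
    (hv : ∀ y, vectorField fracPderiv v (pencilLogForm B y) = 0) : v = 0 :=
  eq_zero_of_dlog_vectorField_fracPderiv_eq_zero hB hspan <|
    dlog_vectorField_eq_zero_of_logForm_eq_zero (fun i ↦ (hB i).fracPderiv_fracPderiv)
      (fun _ hT ↦ eq_empty_of_sum_sumElim_mul_dlog_eq_zero hB hcop hT) hv

theorem exists_pencilLogForm_ne_zero [CharZero 𝕜] [Finite σ] [Nonempty σ]
    (hB : ∀ i, IsDegreeOneForm (B i)) (hcop : IsRelPrime (∏ i, B (.inl i)) (∏ j, B (.inr j)))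
    (hspan : ∀ l, X l ∈ Submodule.span 𝕜 (Set.range B)) : ∃ y, pencilLogForm B y ≠ 0 := by
  by_contra! hη
  have := Fintype.ofFinite σ
  obtain ⟨i⟩ := ‹Nonempty σ›
  have h1 : (1 : σ → K) = 0 :=
    eq_zero_of_vectorField_pencilLogForm_eq_zero hB hcop hspan fun y ↦ by rw [hη, map_zero]
  exact one_ne_zero (congrFun h1 i)

theorem exists_eq_smul_X_of_sum_mul_pderiv_eq_zero [CharZero 𝕜] [Fintype σ]
    (hB : ∀ i, IsDegreeOneForm (B i)) (hcop : IsRelPrime (∏ i, B (.inl i)) (∏ j, B (.inr j)))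
    (hspan : ∀ l, X l ∈ Submodule.span 𝕜 (Set.range B)) {a : σ → MvPolynomial σ 𝕜} {H : K}
    (hH : H ≠ 0) (ha : ∀ y, φ (a y) = H * pencilLogForm B y) {w : σ → K}
    (hw : ∀ i, ∑ j, w j * φ (pderiv j (a i)) = 0) : ∃ μ : K, w = μ • fun l ↦ φ (X l) := by
  refine exists_eq_smul_of_vectorField_mul_eq_zero hH (vectorField_X_logForm hB _)
    (fun v hv ↦ eq_zero_of_vectorField_pencilLogForm_eq_zero hB hcop hspan hv) fun y ↦ ?_
  change vectorField fracPderiv w (H * pencilLogForm B y) = 0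
  simp only [← ha, vectorField_apply, fracPderiv_algebraMap, hw]

theorem sum_X_mul_pderiv_eq_zero_of_det_eq_zero [CharZero 𝕜] [Fintype σ] [DecidableEq σ]
    (hB : ∀ i, IsDegreeOneForm (B i)) (hcop : IsRelPrime (∏ i, B (.inl i)) (∏ j, B (.inr j)))
    (hspan : ∀ l, X l ∈ Submodule.span 𝕜 (Set.range B)) {a : σ → MvPolynomial σ 𝕜} {H : K}
    (hH : H ≠ 0) (ha : ∀ y, φ (a y) = H * pencilLogForm B y)
    (hdet : (Matrix.of fun i j ↦ pderiv j (a i)).det = 0) (i : σ) :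
    ∑ j, X j * pderiv j (a i) = 0 := by
  obtain ⟨w, hw0, hw⟩ := Matrix.exists_mulVec_eq_zero_iff.mpr
    ((RingHom.map_det φ _).symm.trans ((congrArg φ hdet).trans (map_zero φ)))
  have hker (i : σ) : ∑ j, w j * φ (pderiv j (a i)) = 0 := by
    simpa [Matrix.mulVec, dotProduct, mul_comm] using congrFun hw i
  obtain ⟨μ, rfl⟩ := exists_eq_smul_X_of_sum_mul_pderiv_eq_zero hB hcop hspan hH ha hker
  have hμ : μ * φ (∑ j, X j * pderiv j (a i)) = 0 := by
    simpa only [Pi.smul_apply, smul_eq_mul, mul_assoc, ← Finset.mul_sum, ← map_mul, ← map_sum]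
      using hker i
  exact IsFractionRing.to_map_eq_zero_iff.mp
    ((mul_eq_zero.mp hμ).resolve_left (left_ne_zero_of_smul hw0))

theorem det_pderiv_ne_zero_of_eq_prod [CharZero 𝕜] [Fintype σ] [DecidableEq σ]
    (hB : ∀ i, IsDegreeOneForm (B i)) (hspan : ∀ l, X l ∈ Submodule.span 𝕜 (Set.range B))
    {F G h : MvPolynomial σ 𝕜} {d : ℕ} (hF : F.IsHomogeneous d) (hG : G.IsHomogeneous d)
    (hcop : IsRelPrime F G) (hFB : F = ∏ i, B (.inl i)) (hGB : G = ∏ j, B (.inr j))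
    {a : σ → MvPolynomial σ 𝕜} (ha : ∀ i, a i * h = F * pderiv i G - G * pderiv i F) :
    (Matrix.of fun i j ↦ pderiv j (a i)).det ≠ 0 := by
  rcases isEmpty_or_nonempty σ with _ | _
  · rw [Matrix.det_isEmpty]
    exact one_ne_zero
  intro hdet
  have hη (y : σ) : φ (a y) * φ h = φ (F * G) * pencilLogForm B y := by
    rw [← map_mul, ha, hFB, hGB, algebraMap_mul_pencilLogForm hB]
  have hFG : φ (F * G) ≠ 0 := IsFractionRing.to_map_eq_zero_iff.not.mpr <| hFB ▸ hGB ▸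
    mul_ne_zero (prod_ne_zero_of_isDegreeOneForm (fun _ ↦ hB _) _)
      (prod_ne_zero_of_isDegreeOneForm (fun _ ↦ hB _) _)
  rw [hFB, hGB] at hcop
  obtain ⟨y, hy⟩ := exists_pencilLogForm_ne_zero hB hcop hspan
  have hah : φ (a y) * φ h ≠ 0 := hη y ▸ mul_ne_zero hFG hy
  have hh : φ h ≠ 0 := right_ne_zero_of_mul hah
  have hdegree : ∀ i, ∑ j, X j * pderiv j (a i) = 0 :=
    sum_X_mul_pderiv_eq_zero_of_det_eq_zero hB hcop hspan (div_ne_zero hFG hh)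
      (fun y ↦ by rw [div_mul_eq_mul_div, eq_div_iff hh, hη]) hdet
  have hEuler : ∑ i, X i * a i = 0 := by
    refine (mul_eq_zero.mp (?_ : _ * h = 0)).resolve_right (ne_zero_of_map hh)
    simpa only [Finset.sum_mul, mul_assoc, ha] using sum_X_mul_sub_pderiv_eq_zero hF hG
  exact hah (by rw [eq_zero_of_sum_X_mul_eq_zero hdegree hEuler, map_zero, zero_mul])

end Pencil

end RationalFunctions

theorem gauss_map_nondegenerate_general {𝕜 σ : Type*} [Field 𝕜] [CharZero 𝕜] [Fintype σ]
    [DecidableEq σ] {d : ℕ} {F G h : MvPolynomial σ 𝕜} (hF : F.IsHomogeneous d)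
    (hG : G.IsHomogeneous d) (hFcr : IsProductOfDegreeOneForms F)
    (hGcr : IsProductOfDegreeOneForms G) (hcop : IsRelPrime F G)
    (hess : ∀ i, X i ∈ Submodule.span 𝕜 {α | IsDegreeOneForm α ∧ (α ∣ F ∨ α ∣ G)})
    {a : σ → MvPolynomial σ 𝕜} (ha : ∀ i, a i * h = F * pderiv i G - G * pderiv i F) :
    (Matrix.of fun i j ↦ pderiv j (a i)).det ≠ 0 := by
  obtain ⟨p, f, hf, hFf⟩ := hFcr.exists_eq_prod
  obtain ⟨q, g, hg, hGg⟩ := hGcr.exists_eq_prod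
  have hB : ∀ i, IsDegreeOneForm (Sum.elim f g i) := Sum.rec hf hg
  have hle : Submodule.span 𝕜 {α | IsDegreeOneForm α ∧ (α ∣ F ∨ α ∣ G)} ≤
      Submodule.span 𝕜 (Set.range (Sum.elim f g)) := by
    refine Submodule.span_le.mpr fun α ⟨hα, hdvd⟩ ↦ hα.mem_span_of_dvd_prod hB ?_
    rw [Fintype.prod_sumElim, ← hFf, ← hGg]
    exact hdvd.elim (·.mul_right G) (·.mul_left F)
  exact det_pderiv_ne_zero_of_eq_prod hB (fun l ↦ hle (hess l)) hF hG hcop hFf hGg ha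

/-- Theorem (Gauss map): for an essential pencil of hypersurfaces on ℙⁿ with irreducible
generic fiber and at least three completely reducible fibers, the Gauss map of the
associated foliation is non-degenerate, i.e. the Jacobian determinant D = det(∂ⱼaᵢ) of
the coefficients of ω = (Q/Q̃)(F dG - G dF) is not the zero polynomial. -/
theorem gauss_map_nondegenerate
    (n d k u : ℕ) (hn : 2 ≤ n) (hd : 1 ≤ d) (hk : 3 ≤ k)
    (F G : MvPolynomial (Fin (n + 1)) ℂ)
    (hF : F.IsHomogeneous d) (hG : G.IsHomogeneous d)
    (hFcr : CompletelyReducible n F) (hGcr : CompletelyReducible n G)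
    (hcop : RelPrime n F G)
    (hgen : GenericFiberIrreducible n F G)
    -- the pencil is essential: the linear factors of F and G span the whole space of
    -- degree-1 forms
    (hess : ∀ i : Fin (n + 1),
      X i ∈ Submodule.span ℂ
        {α : MvPolynomial (Fin (n + 1)) ℂ | IsLinearForm n α ∧ (α ∣ F ∨ α ∣ G)})
    -- the k ≥ 3 pairwise distinct completely reducible members P_1 = F, P_2 = G, ...
    (c : Fin k → ℂ × ℂ)
    (hprop : ∀ i j, i ≠ j → (c i).1 * (c j).2 ≠ (c i).2 * (c j).1)
    (P : Fin k → MvPolynomial (Fin (n + 1)) ℂ)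
    (hP : ∀ i, P i = C (c i).1 * F + C (c i).2 * G)
    (hP0 : P ⟨0, by omega⟩ = F) (hP1 : P ⟨1, by omega⟩ = G)
    (hPcr : ∀ i, CompletelyReducible n (P i))
    -- Q̃ = ∏ Pᵢ = ∏ αᵢ^{mᵢ} and Q = ∏ αᵢ its radical
    (α : Fin u → MvPolynomial (Fin (n + 1)) ℂ)
    (hα : ∀ i, IsLinearForm n (α i))
    (hαprop : ∀ i j, i ≠ j → ∀ t : ℂ, α i ≠ C t * α j)
    (m : Fin u → ℕ) (hm : ∀ i, 1 ≤ m i)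
    (hQt : ∏ i, P i = ∏ i, α i ^ m i)
    -- the polynomial coefficients aᵢ of ω = (Q/Q̃)·(F dG - G dF)
    (a : Fin (n + 1) → MvPolynomial (Fin (n + 1)) ℂ)
    (ha : ∀ i, a i * ∏ j, α j ^ (m j - 1) = F * pderiv i G - G * pderiv i F) :
    (Matrix.of fun i j => pderiv j (a i)).det ≠ 0 := by
  exact gauss_map_nondegenerate_general hF hG hFcr hGcr (fun p hpF hpG ↦ hcop p hpF hpG) hess ha
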